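/- Let k, n be positive integers, T a k×k complex matrix, and Φ : M_k → M_n a unital completely positive linear map. Then ω(Φ(T)) ≤ ω(T), where ω denotes the numerical radius. -/

import Mathlib

open scoped ComplexOrder

noncomputable section

/-- The induced map of a linear map `Φ : 𝒜 → Mₙ(ℂ)` on `m × m` matrices over `𝒜`,
with the result flattened to an `(m·n) × (m·n)` complex matrix. -/
def blockMap {𝒜 : Type*} [AddCommMonoid 𝒜] [Module ℂ 𝒜] {n : ℕ}
    (Φ : 𝒜 →ₗ[ℂ] Matrix (Fin n) (Fin n) ℂ) (m : ℕ)
    (A : Matrix (Fin m) (Fin m) 𝒜) : Matrix (Fin m × Fin n) (Fin m × Fin n) ℂ :=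
  Matrix.of fun p q => Φ (A p.1 q.1) p.2 q.2

/-- `Φ : 𝒜 → Mₙ(ℂ)` is completely positive: for every `m`, the induced map on
`m × m` matrices over `𝒜` sends positive elements (those of the form `Bᴴ * B`)
to positive semidefinite matrices. -/
def IsCP {𝒜 : Type*} [NonUnitalRing 𝒜] [StarRing 𝒜] [Module ℂ 𝒜] {n : ℕ}
    (Φ : 𝒜 →ₗ[ℂ] Matrix (Fin n) (Fin n) ℂ) : Prop :=
  ∀ (m : ℕ) (A : Matrix (Fin m) (Fin m) 𝒜),
    (∃ B : Matrix (Fin m) (Fin m) 𝒜, A = B.conjTranspose * B) →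
      (blockMap Φ m A).PosSemidef

/-- The numerical radius of a `k × k` complex matrix:
`ω(T) = sup { |⟨T x, x⟩| : ‖x‖ = 1 }`. -/
def numRad {k : ℕ} (T : Matrix (Fin k) (Fin k) ℂ) : ℝ :=
  sSup {r : ℝ | ∃ x : EuclideanSpace ℂ (Fin k), ‖x‖ = 1 ∧
    r = ‖(inner (𝕜 := ℂ) (Matrix.toEuclideanLin T x) x : ℂ)‖}

/-!
For a matrix `B`, the Hermitian part `ℜ B` is positive semidefinite iff `re ⟨B x, x⟩ ≥ 0` for all
`x`. Rotating phases, `|⟨A x, x⟩| ≤ re ⟨P x, x⟩` for all `x` iff `ℜ (P - c A) ≥ 0` for every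
unimodular `c`. A positive map commutes with `ℜ`, so it preserves such dominations. Starting from
`|⟨T x, x⟩| ≤ ω(T) ‖x‖²`, that is `P = ω(T) 1`, one gets `|⟨Φ(T) x, x⟩| ≤ ω(T) ⟨Φ(1) x, x⟩`.
-/

open Matrix
open scoped ComplexConjugate ComplexStarModule MatrixOrder

theorem norm_le_iff_forall_re_conj_mul_le {𝕜 : Type*} [RCLike 𝕜] {z : 𝕜} {r : ℝ} :
    ‖z‖ ≤ r ↔ ∀ c : 𝕜, ‖c‖ = 1 → RCLike.re (conj c * z) ≤ r := by
  constructor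
  · intro hz c hc
    calc RCLike.re (conj c * z) ≤ ‖conj c * z‖ := RCLike.re_le_norm _
      _ = ‖z‖ := by rw [norm_mul, RCLike.norm_conj, hc, one_mul]
      _ ≤ r := hz
  · intro h
    obtain ⟨c, hc, hcz⟩ := RCLike.exists_norm_eq_mul_self z
    simpa only [RCLike.conj_conj, ← hcz, RCLike.ofReal_re] using
      h (conj c) (by rwa [RCLike.norm_conj])

section QuadraticForm

variable {ι κ : Type*} [Fintype ι] [DecidableEq ι] [Fintype κ] [DecidableEq κ]

theorem inner_toEuclideanLin_realPart_self (B : Matrix ι ι ℂ) (x : EuclideanSpace ℂ ι) :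
    inner ℂ (toEuclideanLin (ℜ B : Matrix ι ι ℂ) x) x =
      ((inner ℂ (toEuclideanLin B x) x).re : ℂ) := by
  rw [realPart_apply_coe, ← Complex.coe_smul, map_smul, map_add, star_eq_conjTranspose,
    toEuclideanLin_conjTranspose_eq_adjoint, LinearMap.smul_apply, LinearMap.add_apply,
    inner_smul_left, inner_add_left, LinearMap.adjoint_inner_left,
    ← inner_conj_symm x (toEuclideanLin B x), Complex.add_conj]
  simp [Complex.conj_ofNat]

theorem re_inner_toEuclideanLin_real_smul_self (r : ℝ) (A : Matrix ι ι ℂ)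
    (x : EuclideanSpace ℂ ι) :
    (inner ℂ (toEuclideanLin (r • A) x) x).re = r * (inner ℂ (toEuclideanLin A x) x).re := by
  rw [← Complex.coe_smul, map_smul, LinearMap.smul_apply, inner_smul_left, Complex.conj_ofReal,
    Complex.re_ofReal_mul]

theorem posSemidef_realPart_iff {B : Matrix ι ι ℂ} :
    (ℜ B : Matrix ι ι ℂ).PosSemidef ↔
      ∀ x : EuclideanSpace ℂ ι, 0 ≤ (inner ℂ (toEuclideanLin B x) x).re := by
  simp [← isPositive_toEuclideanLin_iff, LinearMap.isPositive_iff_complex,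
    inner_toEuclideanLin_realPart_self]

theorem norm_inner_toEuclideanLin_le_re_inner_iff {A P : Matrix ι ι ℂ} :
    (∀ x : EuclideanSpace ℂ ι,
        ‖inner ℂ (toEuclideanLin A x) x‖ ≤ (inner ℂ (toEuclideanLin P x) x).re) ↔
      ∀ c : ℂ, ‖c‖ = 1 → (ℜ (P - c • A) : Matrix ι ι ℂ).PosSemidef := by
  have re_inner_sub_smul (c : ℂ) (x : EuclideanSpace ℂ ι) :
      (inner ℂ (toEuclideanLin (P - c • A) x) x).re =
        (inner ℂ (toEuclideanLin P x) x).re -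
          (conj c * inner ℂ (toEuclideanLin A x) x).re := by
    rw [map_sub, map_smul, LinearMap.sub_apply, LinearMap.smul_apply, inner_sub_left,
      inner_smul_left, Complex.sub_re]
  simp only [norm_le_iff_forall_re_conj_mul_le, posSemidef_realPart_iff, re_inner_sub_smul,
    sub_nonneg, RCLike.re_to_complex]
  exact ⟨fun h c hc x => h x c hc, fun h x c hc => h c hc x⟩

theorem norm_inner_toEuclideanLin_map_le_re_inner (Φ : Matrix ι ι ℂ →ₚ[ℂ] Matrix κ κ ℂ)
    {A P : Matrix ι ι ℂ}
    (h : ∀ x : EuclideanSpace ℂ ι,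
      ‖inner ℂ (toEuclideanLin A x) x‖ ≤ (inner ℂ (toEuclideanLin P x) x).re)
    (y : EuclideanSpace ℂ κ) :
    ‖inner ℂ (toEuclideanLin (Φ A) y) y‖ ≤ (inner ℂ (toEuclideanLin (Φ P) y) y).re := by
  refine norm_inner_toEuclideanLin_le_re_inner_iff.mpr (fun c hc => ?_) y
  rw [← map_smul, ← map_sub, ← map_realPart, ← nonneg_iff_posSemidef]
  exact Φ.map_nonneg (norm_inner_toEuclideanLin_le_re_inner_iff.mp h c hc).nonneg

end QuadraticForm

section NumericalRadius

variable {k : ℕ}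

theorem bddAbove_norm_inner_toEuclideanLin {ι : Type*} [Fintype ι] [DecidableEq ι]
    (T : Matrix ι ι ℂ) :
    BddAbove {r : ℝ | ∃ x : EuclideanSpace ℂ ι, ‖x‖ = 1 ∧
      r = ‖inner ℂ (toEuclideanLin T x) x‖} := by
  refine ⟨‖(toEuclideanLin T).toContinuousLinearMap‖, ?_⟩
  rintro _ ⟨x, hx, rfl⟩
  calc ‖inner ℂ (toEuclideanLin T x) x‖ ≤ ‖toEuclideanLin T x‖ * ‖x‖ := norm_inner_le_norm _ _
    _ ≤ ‖(toEuclideanLin T).toContinuousLinearMap‖ := by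
      simpa [hx] using (toEuclideanLin T).toContinuousLinearMap.le_opNorm x

theorem numRad_nonneg (T : Matrix (Fin k) (Fin k) ℂ) : 0 ≤ numRad T :=
  Real.sSup_nonneg fun _ ⟨_, _, hr⟩ => hr ▸ norm_nonneg _

theorem norm_inner_le_numRad (T : Matrix (Fin k) (Fin k) ℂ) {x : EuclideanSpace ℂ (Fin k)}
    (hx : ‖x‖ = 1) : ‖inner ℂ (toEuclideanLin T x) x‖ ≤ numRad T :=
  le_csSup (bddAbove_norm_inner_toEuclideanLin T) ⟨x, hx, rfl⟩

theorem numRad_le (hk : 0 < k) {T : Matrix (Fin k) (Fin k) ℂ} {r : ℝ}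
    (h : ∀ x : EuclideanSpace ℂ (Fin k), ‖x‖ = 1 → ‖inner ℂ (toEuclideanLin T x) x‖ ≤ r) :
    numRad T ≤ r := by
  refine csSup_le ⟨_, EuclideanSpace.single ⟨0, hk⟩ 1, by simp, rfl⟩ ?_
  rintro _ ⟨x, hx, rfl⟩
  exact h x hx

theorem numRad_one (hk : 0 < k) : numRad (1 : Matrix (Fin k) (Fin k) ℂ) = 1 := by
  have norm_inner_one {x : EuclideanSpace ℂ (Fin k)} (hx : ‖x‖ = 1) :
      ‖inner ℂ (toEuclideanLin (1 : Matrix (Fin k) (Fin k) ℂ) x) x‖ = 1 := by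
    simp [toLpLin_one, hx]
  refine le_antisymm (numRad_le hk fun x hx => (norm_inner_one hx).le) ?_
  have he : ‖EuclideanSpace.single (⟨0, hk⟩ : Fin k) (1 : ℂ)‖ = 1 := by simp
  exact (norm_inner_one he).ge.trans (norm_inner_le_numRad 1 he)

theorem norm_inner_le_numRad_mul_norm_sq (T : Matrix (Fin k) (Fin k) ℂ)
    (x : EuclideanSpace ℂ (Fin k)) :
    ‖inner ℂ (toEuclideanLin T x) x‖ ≤ numRad T * ‖x‖ ^ 2 := by
  rcases eq_or_ne x 0 with rfl | hx
  · simp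
  have hx0 : 0 < ‖x‖ := norm_pos_iff.mpr hx
  have hunit : ‖((‖x‖⁻¹ : ℝ) : ℂ) • x‖ = 1 := by simp [norm_smul, hx0.ne']
  have h := norm_inner_le_numRad T hunit
  rw [map_smul, inner_smul_left, inner_smul_right, norm_mul, norm_mul, RCLike.norm_conj,
    Complex.norm_real, norm_inv, norm_norm] at h
  field_simp at h
  linarith

end NumericalRadius

section CompletelyPositive

variable {𝒜 : Type*} [NonUnitalRing 𝒜] [StarRing 𝒜] [Module ℂ 𝒜] {n : ℕ}
  {Φ : 𝒜 →ₗ[ℂ] Matrix (Fin n) (Fin n) ℂ}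

theorem IsCP.posSemidef_apply_star_mul_self (hΦ : IsCP Φ) (b : 𝒜) :
    (Φ (star b * b)).PosSemidef := by
  have h := hΦ 1 (of fun _ _ => star b * b) ⟨of fun _ _ => b, by ext; simp [mul_apply]⟩
  exact h.submatrix fun i => (0, i)

theorem IsCP.map_nonneg [PartialOrder 𝒜] [StarOrderedRing 𝒜] (hΦ : IsCP Φ) {a : 𝒜}
    (ha : 0 ≤ a) : 0 ≤ Φ a := by
  have nonneg_on_generators : Set.range (fun b : 𝒜 => star b * b) ⊆
      (AddSubmonoid.nonneg (Matrix (Fin n) (Fin n) ℂ)).comap (Φ : 𝒜 →+ _) := by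
    rintro _ ⟨b, rfl⟩
    exact (hΦ.posSemidef_apply_star_mul_self b).nonneg
  exact AddSubmonoid.closure_le.mpr nonneg_on_generators (StarOrderedRing.nonneg_iff.mp ha)

end CompletelyPositive

theorem numRad_apply_le_numRad_general {k n : ℕ} (hn : 0 < n)
    (Φ : Matrix (Fin k) (Fin k) ℂ →ₚ[ℂ] Matrix (Fin n) (Fin n) ℂ)
    (T : Matrix (Fin k) (Fin k) ℂ) :
    numRad (Φ T) ≤ numRad T * numRad (Φ 1) := by
  have form_le (x : EuclideanSpace ℂ (Fin k)) : ‖inner ℂ (toEuclideanLin T x) x‖ ≤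
      (inner ℂ (toEuclideanLin (numRad T • (1 : Matrix (Fin k) (Fin k) ℂ)) x) x).re := by
    refine (norm_inner_le_numRad_mul_norm_sq T x).trans_eq ?_
    simp [re_inner_toEuclideanLin_real_smul_self, toLpLin_one, ← Complex.ofReal_pow]
  refine numRad_le hn fun y hy => ?_
  calc ‖inner ℂ (toEuclideanLin (Φ T) y) y‖
      ≤ (inner ℂ (toEuclideanLin (Φ (numRad T • (1 : Matrix (Fin k) (Fin k) ℂ))) y) y).re :=
        norm_inner_toEuclideanLin_map_le_re_inner Φ form_le y
    _ = numRad T * (inner ℂ (toEuclideanLin (Φ 1) y) y).re := by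
        rw [Φ.map_smul_of_tower, re_inner_toEuclideanLin_real_smul_self]
    _ ≤ numRad T * numRad (Φ 1) := by
        gcongr
        · exact numRad_nonneg T
        · exact (Complex.re_le_norm _).trans (norm_inner_le_numRad _ hy)

/-- If `Φ : M_k(ℂ) → Mₙ(ℂ)` is unital and completely positive, then
`ω(Φ(T)) ≤ ω(T)` for every `k × k` complex matrix `T`. -/
theorem numRad_apply_le_numRad (k n : ℕ) (hk : 0 < k) (hn : 0 < n)
    (T : Matrix (Fin k) (Fin k) ℂ)
    (Φ : Matrix (Fin k) (Fin k) ℂ →ₗ[ℂ] Matrix (Fin n) (Fin n) ℂ)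
    (hΦ1 : Φ 1 = 1) (hΦ : IsCP Φ) :
    numRad (Φ T) ≤ numRad T := by
  have h : numRad (Φ T) ≤ numRad T * numRad (Φ 1) :=
    numRad_apply_le_numRad_general hn (.mk₀ Φ fun _ => hΦ.map_nonneg) T
  rwa [hΦ1, numRad_one hn, mul_one] at h
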